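/- Let U ⊆ ℝ³ be open and let α, β, δ, ε, ζ be smooth real-valued functions on U with β and ζ nowhere zero, satisfying the contact system (S1) α₁ = 0, (S2) βδ₁ = αε₁, (S3) β(αε − δβ)ζ₂ + (αβ₃ − βα₃)ζ² + (β²δ₂ − αβε₂ + αεβ₂ − βεα₂ − 2β)ζ = 0, (S4) β₁ = 0, (S5) ζ₁ = 0. Set F := δ − αε/β, B := [[α, β, 0], [δ, ε, ζ], [1, 0, 0]], G := B⁻¹(B⁻¹)ᵀ (a smooth field of symmetric positive definite matrices on U), and consider the frame e₁ = (α, β, 0), e₂ = (δ, ε, ζ), e₃ = (1, 0, 0) as vector fields on U. Define the 1-form η(X) := Xᵀ G e₃ (explicitly η = dx¹ − (α/β)dx² − (F/ζ)dx³), and at each point the linear map φ : ℝ³ → ℝ³ determined by φe₁ = e₂, φe₂ = −e₁, φe₃ = 0. Then at every point of U: (i) the frame is G-orthonormal, e_αᵀ G e_β = δ_{αβ}; (ii) η(e₃) = 1; (iii) φ²X = −X + η(X)e₃ for all X ∈ ℝ³; (iv) (φX)ᵀ G (φY) = Xᵀ G Y − η(X)η(Y) for all X, Y ∈ ℝ³;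 (v) (1/2)(∂ᵢη(∂ⱼ) − ∂ⱼη(∂ᵢ)) = ∂ᵢᵀ G (φ∂ⱼ) for all i, j ∈ {1,2,3}, i.e. with the convention dη(X,Y) = (1/2)(Xη(Y) − Yη(X) − η([X,Y])) one has dη(X,Y) = G(X, φY). Hence (η, φ, ξ := e₃, G) is a contact metric structure on U. -/

import Mathlib

open Matrix

/-- Partial derivative `∂f/∂xⁱ`. -/
noncomputable def pd (i : Fin 3) (f : (Fin 3 → ℝ) → ℝ) (p : Fin 3 → ℝ) : ℝ :=
  fderiv ℝ f p (Pi.single i 1)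

lemma pd_sub' (i : Fin 3) {f g : (Fin 3 → ℝ) → ℝ} {p : Fin 3 → ℝ}
    (hf : DifferentiableAt ℝ f p) (hg : DifferentiableAt ℝ g p) :
    pd i (fun q => f q - g q) p = pd i f p - pd i g p := by
  unfold pd
  rw [(hf.hasFDerivAt.fun_sub hg.hasFDerivAt).fderiv]
  simp

lemma pd_mul' (i : Fin 3) {f g : (Fin 3 → ℝ) → ℝ} {p : Fin 3 → ℝ}
    (hf : DifferentiableAt ℝ f p) (hg : DifferentiableAt ℝ g p) :
    pd i (fun q => f q * g q) p = pd i f p * g p + f p * pd i g p := by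
  unfold pd
  rw [(hf.hasFDerivAt.fun_mul hg.hasFDerivAt).fderiv]
  simp
  ring

lemma pd_div' (i : Fin 3) {f g : (Fin 3 → ℝ) → ℝ} {p : Fin 3 → ℝ}
    (hf : DifferentiableAt ℝ f p) (hg : DifferentiableAt ℝ g p) (h0 : g p ≠ 0) :
    pd i (fun q => f q / g q) p = (pd i f p * g p - f p * pd i g p) / g p ^ 2 := by
  have hd : DifferentiableAt ℝ (fun q => f q / g q) p := by fun_prop (disch := assumption)
  have h := pd_mul' i hd hg
  have h2 : pd i (fun q => f q / g q * g q) p = pd i f p := by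
    unfold pd
    congr 1
    apply Filter.EventuallyEq.fderiv_eq
    filter_upwards [hg.continuousAt.eventually_ne h0] with q hq
    field_simp
  rw [h2] at h
  rw [h]
  field_simp
  ring

lemma pd_congr' (i : Fin 3) {f g : (Fin 3 → ℝ) → ℝ} {p : Fin 3 → ℝ} {U : Set (Fin 3 → ℝ)}
    (hU : IsOpen U) (hp : p ∈ U) (h : ∀ q ∈ U, f q = g q) : pd i f p = pd i g p := by
  unfold pd
  congr 1
  apply Filter.EventuallyEq.fderiv_eq
  filter_upwards [hU.mem_nhds hp] with q hq using h q hq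

lemma pd_const' (i : Fin 3) (c : ℝ) (p : Fin 3 → ℝ) : pd i (fun _ => c) p = 0 := by
  simp [pd]

lemma pd_neg' (i : Fin 3) (f : (Fin 3 → ℝ) → ℝ) (p : Fin 3 → ℝ) :
    pd i (fun q => - f q) p = - pd i f p := by
  simp [pd]

lemma inv_explicit {a b d e z : ℝ} (hb : b ≠ 0) (hz : z ≠ 0) :
    (!![a, b, 0; d, e, z; 1, 0, 0] : Matrix (Fin 3) (Fin 3) ℝ)⁻¹ =
      !![0, 0, 1; 1 / b, 0, -(a / b); -(e / (b * z)), 1 / z, -((d - a * e / b) / z)] := by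
  apply Matrix.inv_eq_right_inv
  ext i j
  fin_cases i <;> fin_cases j <;>
    simp [Matrix.mul_apply, Fin.sum_univ_three] <;> field_simp <;> ring

/-- if `α, β, δ, ε, ζ` solve the contact system (S1)–(S5) on `U`
(with `β, ζ` nowhere zero), set `F := δ − αε/β`, `B := [[α,β,0],[δ,ε,ζ],[1,0,0]]`,
`G := B⁻¹(B⁻¹)ᵀ`, frame `e₁ = (α,β,0)`, `e₂ = (δ,ε,ζ)`, `e₃ = (1,0,0)`,
`η(X) := Xᵀ G e₃`, and let `φ` be the field of linear maps determined by
`φe₁ = e₂`, `φe₂ = −e₁`, `φe₃ = 0`. Then at every `p ∈ U`: `G p` is symmetric positive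
definite; `η = dx¹ − (α/β)dx² − (F/ζ)dx³` explicitly; the frame is `G`-orthonormal;
`η(e₃) = 1`; `φ² = −I + η ⊗ e₃`; `G(φX,φY) = G(X,Y) − η(X)η(Y)`; and
`(1/2)(∂ᵢη(∂ⱼ) − ∂ⱼη(∂ᵢ)) = G(∂ᵢ, φ∂ⱼ)`, i.e. `dη(X,Y) = G(X,φY)` with Blair's
convention. Hence `(η, φ, ξ := e₃, G)` is a contact metric structure on `U`.
(Coordinates and indices `1,2,3` of the paper are `0,1,2` here.) -/
theorem stmt_11 (U : Set (Fin 3 → ℝ)) (hU : IsOpen U)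
    (α β δ ε ζ : (Fin 3 → ℝ) → ℝ)
    (hα : ContDiffOn ℝ (⊤ : ℕ∞) α U) (hβs : ContDiffOn ℝ (⊤ : ℕ∞) β U)
    (hδ : ContDiffOn ℝ (⊤ : ℕ∞) δ U) (hε : ContDiffOn ℝ (⊤ : ℕ∞) ε U)
    (hζs : ContDiffOn ℝ (⊤ : ℕ∞) ζ U)
    (hβ : ∀ p ∈ U, β p ≠ 0) (hζ : ∀ p ∈ U, ζ p ≠ 0)
    (hS1 : ∀ p ∈ U, pd 0 α p = 0)
    (hS2 : ∀ p ∈ U, β p * pd 0 δ p = α p * pd 0 ε p)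
    (hS3 : ∀ p ∈ U,
      β p * (α p * ε p - δ p * β p) * pd 1 ζ p +
        (α p * pd 2 β p - β p * pd 2 α p) * ζ p ^ 2 +
        (β p ^ 2 * pd 1 δ p - α p * β p * pd 1 ε p + α p * ε p * pd 1 β p -
          β p * ε p * pd 1 α p - 2 * β p) * ζ p = 0)
    (hS4 : ∀ p ∈ U, pd 0 β p = 0)
    (hS5 : ∀ p ∈ U, pd 0 ζ p = 0)
    (F : (Fin 3 → ℝ) → ℝ) (hF : F = fun p => δ p - α p * ε p / β p)
    (B : (Fin 3 → ℝ) → Matrix (Fin 3) (Fin 3) ℝ)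
    (hB : B = fun p => !![α p, β p, 0; δ p, ε p, ζ p; 1, 0, 0])
    (G : (Fin 3 → ℝ) → Matrix (Fin 3) (Fin 3) ℝ)
    (hG : G = fun p => (B p)⁻¹ * ((B p)⁻¹)ᵀ)
    (e : Fin 3 → (Fin 3 → ℝ) → (Fin 3 → ℝ))
    (he : e = ![fun p => ![α p, β p, 0], fun p => ![δ p, ε p, ζ p], fun _ => ![1, 0, 0]])
    (η : (Fin 3 → ℝ) → (Fin 3 → ℝ) → ℝ)
    (hη : η = fun p X => X ⬝ᵥ (G p *ᵥ e 2 p))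
    (φ : (Fin 3 → ℝ) → Matrix (Fin 3) (Fin 3) ℝ)
    (hφ : ∀ p ∈ U, φ p *ᵥ e 0 p = e 1 p ∧ φ p *ᵥ e 1 p = -(e 0 p) ∧ φ p *ᵥ e 2 p = 0) :
    ∀ p ∈ U,
      ((G p).IsSymm ∧ (G p).PosDef) ∧
      (∀ X : Fin 3 → ℝ, η p X = X 0 - (α p / β p) * X 1 - (F p / ζ p) * X 2) ∧
      (∀ a b : Fin 3, e a p ⬝ᵥ (G p *ᵥ e b p) = if a = b then 1 else 0) ∧
      η p (e 2 p) = 1 ∧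
      (∀ X : Fin 3 → ℝ, φ p *ᵥ (φ p *ᵥ X) = -X + η p X • e 2 p) ∧
      (∀ X Y : Fin 3 → ℝ,
        (φ p *ᵥ X) ⬝ᵥ (G p *ᵥ (φ p *ᵥ Y)) = X ⬝ᵥ (G p *ᵥ Y) - η p X * η p Y) ∧
      (∀ i j : Fin 3,
        (1 / 2) * (pd i (fun q => η q (Pi.single j 1)) p -
            pd j (fun q => η q (Pi.single i 1)) p) =
          Pi.single i 1 ⬝ᵥ (G p *ᵥ (φ p *ᵥ Pi.single j 1))) := by
  intro p hp
  have hGe : ∀ q ∈ U, G q =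
      !![0, 0, 1; 1 / β q, 0, -(α q / β q); -(ε q / (β q * ζ q)), 1 / ζ q, -(F q / ζ q)] *
      !![0, 0, 1; 1 / β q, 0, -(α q / β q); -(ε q / (β q * ζ q)), 1 / ζ q, -(F q / ζ q)]ᵀ := by
    intro q hq
    rw [hG, hB, hF]
    simp only [inv_explicit (hβ q hq) (hζ q hq)]
  have hηe : ∀ q ∈ U, ∀ X : Fin 3 → ℝ,
      η q X = X 0 - (α q / β q) * X 1 - (F q / ζ q) * X 2 := by
    intro q hq X
    rw [hη]
    simp only [hGe q hq, he]
    simp [Matrix.mulVec, dotProduct, Matrix.mul_apply, Fin.sum_univ_three]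
    ring
  have hb := hβ p hp
  have hz := hζ p hp
  have hφe : φ p = !![0, δ p / β p, -(ε p / (β p * ζ p) * δ p) - α p / ζ p;
      0, ε p / β p, -(ε p / (β p * ζ p) * ε p) - β p / ζ p;
      0, ζ p / β p, -(ε p / (β p * ζ p) * ζ p)] := by
    obtain ⟨h1, h2, h3⟩ := hφ p hp
    have k0 : ∀ i, φ p i 0 = 0 := by
      intro i
      have := congrFun h3 i
      simpa [he, Matrix.mulVec, dotProduct, Fin.sum_univ_three] using this
    have k1 : ∀ i, φ p i 1 = e 1 p i / β p := by
      intro i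
      have := congrFun h1 i
      rw [eq_div_iff hb, ← this]
      simp [he, Matrix.mulVec, dotProduct, Fin.sum_univ_three, k0]
    have k2 : ∀ i, φ p i 2 = -(ε p / (β p * ζ p) * e 1 p i) - e 0 p i / ζ p := by
      intro i
      have := congrFun h2 i
      have h4 : φ p i 2 * ζ p = - e 0 p i - e 1 p i / β p * ε p := by
        rw [← k1 i]
        rw [Pi.neg_apply] at this
        rw [← this]
        simp [he, Matrix.mulVec, dotProduct, Fin.sum_univ_three, k0]
      rw [← mul_left_inj' hz, h4]
      field_simp
      ring
    ext i j
    fin_cases j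
    · simp [k0]; fin_cases i <;> simp
    · simp [k1]; fin_cases i <;> simp [he]
    · simp [k2]; fin_cases i <;> simp [he]
  have hBu : IsUnit (B p).det := by
    rw [hB, Matrix.det_fin_three]
    simp [hb, hz]
  refine ⟨⟨?_, ?_⟩, hηe p hp, ?_, ?_, ?_, ?_, ?_⟩
  · rw [hG]
    simp [Matrix.IsSymm]
  · rw [hG]
    have := Matrix.PosDef.mul_conjTranspose_self (B p)⁻¹ (by
      rw [Matrix.vecMul_injective_iff_isUnit]
      exact (Matrix.isUnit_nonsing_inv_iff).2 ((Matrix.isUnit_iff_isUnit_det _).2 hBu))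
    simpa [Matrix.conjTranspose_eq_transpose_of_trivial] using this
  · intro a b
    rw [hGe p hp, he, hF]
    fin_cases a <;> fin_cases b <;>
      simp [Matrix.mulVec, dotProduct, Matrix.mul_apply, Fin.sum_univ_three] <;>
      field_simp <;> ring
  · rw [hηe p hp]
    simp [he]
  · intro X
    rw [hηe p hp, hφe, hF, he]
    ext i
    fin_cases i <;>
      simp [Matrix.mulVec, dotProduct, Fin.sum_univ_three] <;>
      field_simp <;> ring
  · intro X Y
    rw [hηe p hp, hηe p hp, hφe, hGe p hp, hF]
    simp [Matrix.mulVec, dotProduct, Matrix.mul_apply, Fin.sum_univ_three]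
    field_simp
    ring
  · have dd : ∀ {f : (Fin 3 → ℝ) → ℝ}, ContDiffOn ℝ (⊤ : ℕ∞) f U → DifferentiableAt ℝ f p :=
      fun h => (h.contDiffAt (hU.mem_nhds hp)).differentiableAt (by simp)
    have dα := dd hα
    have dβ := dd hβs
    have dδ := dd hδ
    have dε := dd hε
    have dζ := dd hζs
    have dF : DifferentiableAt ℝ F p := by
      rw [hF]; fun_prop (disch := assumption)
    have pF : ∀ i, pd i F p = pd i δ p -
        ((pd i α p * ε p + α p * pd i ε p) * β p - α p * ε p * pd i β p) / β p ^ 2 := by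
      intro i
      rw [hF, pd_sub' i dδ (by fun_prop (disch := assumption)),
        pd_div' i (by fun_prop) dβ hb, pd_mul' i dα dε]
    have q0 : ∀ i, pd i (fun q => η q (Pi.single 0 1)) p = 0 := by
      intro i
      rw [pd_congr' i hU hp (g := fun _ => 1), pd_const']
      intro q hq
      rw [hηe q hq]; simp
    have q1 : ∀ i, pd i (fun q => η q (Pi.single 1 1)) p =
        -((pd i α p * β p - α p * pd i β p) / β p ^ 2) := by
      intro i
      rw [pd_congr' i hU hp (g := fun q => -(α q / β q)), pd_neg', pd_div' i dα dβ hb]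
      intro q hq
      rw [hηe q hq]; simp
    have q2 : ∀ i, pd i (fun q => η q (Pi.single 2 1)) p =
        -((pd i F p * ζ p - F p * pd i ζ p) / ζ p ^ 2) := by
      intro i
      rw [pd_congr' i hU hp (g := fun q => -(F q / ζ q)), pd_neg', pd_div' i dF dζ hz]
      intro q hq
      rw [hηe q hq]; simp
    have s1 := hS1 p hp
    have s2 := hS2 p hp
    have s3 := hS3 p hp
    have s4 := hS4 p hp
    have s5 := hS5 p hp
    have r1 : pd 0 (fun q => η q (Pi.single 1 1)) p = 0 := by
      rw [q1, s1, s4]; simp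
    have r2 : pd 0 (fun q => η q (Pi.single 2 1)) p = 0 := by
      have : pd 0 F p = 0 := by
        rw [pF, s1, s4]
        field_simp
        linear_combination (β p) * s2
      rw [q2, this, s5]; simp
    have r3 : pd 1 (fun q => η q (Pi.single 2 1)) p - pd 2 (fun q => η q (Pi.single 1 1)) p =
        -(2 / (β p * ζ p)) := by
      rw [q1, q2, pF, hF]
      field_simp
      linear_combination (-1) * s3
    have hr : ∀ i j : Fin 3, (Pi.single i 1 : Fin 3 → ℝ) ⬝ᵥ (G p *ᵥ (φ p *ᵥ Pi.single j 1)) =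
        (!![0, 0, 0; 0, 0, -(1 / (β p * ζ p)); 0, 1 / (β p * ζ p), 0] :
          Matrix (Fin 3) (Fin 3) ℝ) i j := by
      intro i j
      rw [hGe p hp, hφe, hF]
      fin_cases i <;> fin_cases j <;>
        simp [Matrix.mulVec, dotProduct, Matrix.mul_apply, Fin.sum_univ_three] <;>
        field_simp <;> ring
    intro i j
    rw [hr]
    fin_cases i <;> fin_cases j <;> simp [q0, r1, r2]
    · rw [r3]; field_simp
    · rw [← neg_sub, r3]; field_simp
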